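/- arXiv:2506.16561 — 3 statements merged into one kernel-verified Lean document; each statement's English description precedes it below -/
import Mathlib

section
/- Let λ1 and λ2 be hook-shaped partitions of n, and let A ∈ SYT(λ1), B ∈ SYT(λ2). Then the cardinality |S_{A,B}| of the set of values lying in the first row of both A and B is invariant under the diagonal C_n-action: for every element g of the group generated by the simultaneous Bender–Knuth involutions, |S_{g(A),g(B)}| = |S_{A,B}|. -/
/-!
In a hook every cell lies in the first row or the first column, and the corner carries the
entry `1`. Hence for `k ≥ 2` the involution `t_k` does nothing only when `k` and `k + 1` are both
in the first row or both outside it; so in every case the set of first-row values of `t_k T` is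
the image of that of `T` under the transposition `(k, k + 1)` (`inFirstRow_bkFun`). For `k = 1`
the involution is trivial on every tableau (`bkFun_one`). Consequently a simultaneous `t_k`
transforms `S_{A,B}` by a single bijection, which preserves its cardinality, and the claim passes
from the generators to the whole group.
-/

/-- A standard Young tableau of shape `μ`: a filling of the cells of `μ` by the
numbers `1, …, μ.card` (bijectively), strictly increasing along rows and columns,
with value `0` outside the diagram. -/
structure SYT (μ : YoungDiagram) where
  entry : ℕ → ℕ → ℕ
  zero_outside : ∀ i j, (i, j) ∉ μ → entry i j = 0
  row_strict : ∀ i j1 j2, j1 < j2 → (i, j2) ∈ μ → entry i j1 < entry i j2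
  col_strict : ∀ i1 i2 j, i1 < i2 → (i2, j) ∈ μ → entry i1 j < entry i2 j
  image_eq : μ.cells.image (fun c => entry c.1 c.2) = Finset.Icc 1 μ.card

theorem SYT.ext' {μ : YoungDiagram} {A B : SYT μ} (h : A.entry = B.entry) : A = B := by
  cases A; cases B; simp_all

/-- The involution of values swapping `k` and `k + 1`. -/
def swapVal (k x : ℕ) : ℕ := if x = k then k + 1 else if x = k + 1 then k else x

theorem swapVal_invol (k : ℕ) : Function.Involutive (swapVal k) := by
  intro x; unfold swapVal; split_ifs <;> omega

open Classical in
/-- The Bender–Knuth involution `t_k` as a function: interchange the entries `k` and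
`k + 1` if the result is again a standard Young tableau, and do nothing otherwise. -/
noncomputable def bkFun (μ : YoungDiagram) (k : ℕ) (T : SYT μ) : SYT μ :=
  if h : ∃ T' : SYT μ, T'.entry = fun i j => swapVal k (T.entry i j) then h.choose else T

theorem bkFun_pos {μ : YoungDiagram} {k : ℕ} {T : SYT μ}
    (h : ∃ T' : SYT μ, T'.entry = fun i j => swapVal k (T.entry i j)) :
    (bkFun μ k T).entry = fun i j => swapVal k (T.entry i j) := by
  unfold bkFun; rw [dif_pos h]; exact h.choose_spec

theorem bkFun_neg {μ : YoungDiagram} {k : ℕ} {T : SYT μ}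
    (h : ¬ ∃ T' : SYT μ, T'.entry = fun i j => swapVal k (T.entry i j)) :
    bkFun μ k T = T := by
  unfold bkFun; rw [dif_neg h]

theorem bkFun_invol (μ : YoungDiagram) (k : ℕ) : Function.Involutive (bkFun μ k) := by
  intro T
  by_cases h : ∃ T' : SYT μ, T'.entry = fun i j => swapVal k (T.entry i j)
  · have e1 : (bkFun μ k T).entry = fun i j => swapVal k (T.entry i j) := bkFun_pos h
    have h2 : ∃ T'' : SYT μ, T''.entry = fun i j => swapVal k ((bkFun μ k T).entry i j) := by
      refine ⟨T, ?_⟩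
      funext i j
      simp only [e1]
      exact (swapVal_invol k (T.entry i j)).symm
    apply SYT.ext'
    rw [bkFun_pos h2]
    funext i j
    simp only [e1]
    exact swapVal_invol k (T.entry i j)
  · rw [bkFun_neg h, bkFun_neg h]

/-- The Bender–Knuth involution `t_k` as a permutation of `SYT μ`. -/
noncomputable def BK (μ : YoungDiagram) (k : ℕ) : Equiv.Perm (SYT μ) :=
  (bkFun_invol μ k).toPerm

/-- The image of the cactus group `C_n` in the permutation group of `SYT μ`:
the subgroup generated by the Bender–Knuth involutions `t_1, …, t_{n-1}`. -/
noncomputable def BKgroup (μ : YoungDiagram) : Subgroup (Equiv.Perm (SYT μ)) :=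
  Subgroup.closure (BK μ '' Set.Icc 1 (μ.card - 1))

/-- The simultaneous Bender–Knuth involution `t_k` on pairs of tableaux. -/
noncomputable def BKpair (μ1 μ2 : YoungDiagram) (k : ℕ) : Equiv.Perm (SYT μ1 × SYT μ2) :=
  Equiv.prodCongr (BK μ1 k) (BK μ2 k)

/-- The image of the cactus group acting diagonally on pairs of tableaux. -/
noncomputable def BKpairGroup (μ1 μ2 : YoungDiagram) : Subgroup (Equiv.Perm (SYT μ1 × SYT μ2)) :=
  Subgroup.closure (BKpair μ1 μ2 '' Set.Icc 1 (μ1.card - 1))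

/-- The simultaneous Bender–Knuth involution `t_k` on triples of tableaux. -/
noncomputable def BKtriple (μ1 μ2 μ3 : YoungDiagram) (k : ℕ) :
    Equiv.Perm (SYT μ1 × SYT μ2 × SYT μ3) :=
  Equiv.prodCongr (BK μ1 k) (Equiv.prodCongr (BK μ2 k) (BK μ3 k))

/-- The image of the cactus group acting diagonally on triples of tableaux. -/
noncomputable def BKtripleGroup (μ1 μ2 μ3 : YoungDiagram) :
    Subgroup (Equiv.Perm (SYT μ1 × SYT μ2 × SYT μ3)) :=
  Subgroup.closure (BKtriple μ1 μ2 μ3 '' Set.Icc 1 (μ1.card - 1))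

/-- A partition is hook-shaped if its diagram has no box in position `(2,2)`
(in 1-indexed terms), i.e. no cell `(1,1)` in 0-indexed terms. -/
def HookShaped (μ : YoungDiagram) : Prop := (1, 1) ∉ μ

/-- A partition is almost hook-shaped if it is a hook plus the single box `(2,2)`. -/
def AlmostHookShaped (μ : YoungDiagram) : Prop :=
  (1, 1) ∈ μ ∧ (1, 2) ∉ μ ∧ (2, 1) ∉ μ

/-- The value `k` occurs in the first row of `A`. -/
def SYT.inFirstRow {μ : YoungDiagram} (A : SYT μ) (k : ℕ) : Prop :=
  ∃ j, (0, j) ∈ μ ∧ A.entry 0 j = k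

open scoped Classical in
/-- The set `S_{A,B}` of values lying in the first row of both `A` and `B`. -/
noncomputable def sharedFirstRow {μ1 μ2 : YoungDiagram} (A : SYT μ1) (B : SYT μ2) : Finset ℕ :=
  (Finset.Icc 1 μ1.card).filter (fun k => A.inFirstRow k ∧ B.inFirstRow k)

/-- Tableaux (possibly of different shapes) are equal, as fillings of the plane. -/
def EqTab {μ1 μ2 : YoungDiagram} (A : SYT μ1) (B : SYT μ2) : Prop := A.entry = B.entry

/-- `B` is the transpose of `A`. -/
def EqTransposeTab {μ1 μ2 : YoungDiagram} (A : SYT μ1) (B : SYT μ2) : Prop :=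
  ∀ i j, B.entry i j = A.entry j i

/-- A pair of partitions of the same `n` is viable if at most one of them is hook-shaped. -/
def ViablePairShape (μ1 μ2 : YoungDiagram) : Prop := ¬ (HookShaped μ1 ∧ HookShaped μ2)

/-- A pair of tableaux is viable if the pair of shapes is viable, the tableaux are
different and not transposes of each other. -/
def ViableTabPair {μ1 μ2 : YoungDiagram} (A : SYT μ1) (B : SYT μ2) : Prop :=
  ViablePairShape μ1 μ2 ∧ ¬ EqTab A B ∧ ¬ EqTransposeTab A B

/-- A pair of partitions is base case if it is viable and either both are almost
hook-shaped or one is almost hook-shaped and the other is hook-shaped. -/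
def BaseCasePair (μ1 μ2 : YoungDiagram) : Prop :=
  ViablePairShape μ1 μ2 ∧
    ((AlmostHookShaped μ1 ∧ AlmostHookShaped μ2) ∨
      (AlmostHookShaped μ1 ∧ HookShaped μ2) ∨ (HookShaped μ1 ∧ AlmostHookShaped μ2))

/-- A triple of partitions is viable if at most one of them is hook-shaped. -/
def ViableTripleShape (μ1 μ2 μ3 : YoungDiagram) : Prop :=
  ¬ (HookShaped μ1 ∧ HookShaped μ2) ∧ ¬ (HookShaped μ1 ∧ HookShaped μ3) ∧
    ¬ (HookShaped μ2 ∧ HookShaped μ3)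

/-- A triple of tableaux is viable if the shapes are viable, no two of the tableaux
are equal and no two are transposes of each other. -/
def ViableTabTriple {μ1 μ2 μ3 : YoungDiagram} (A : SYT μ1) (B : SYT μ2) (C : SYT μ3) : Prop :=
  ViableTripleShape μ1 μ2 μ3 ∧
    (¬ EqTab A B ∧ ¬ EqTab A C ∧ ¬ EqTab B C) ∧
    (¬ EqTransposeTab A B ∧ ¬ EqTransposeTab A C ∧ ¬ EqTransposeTab B C)

/-- A triple of partitions is base case if it is viable and either two of them are
almost hook-shaped, or one is almost hook-shaped and another one is hook-shaped. -/
def BaseCaseTriple (μ1 μ2 μ3 : YoungDiagram) : Prop :=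
  ViableTripleShape μ1 μ2 μ3 ∧
    ((AlmostHookShaped μ1 ∧ AlmostHookShaped μ2) ∨ (AlmostHookShaped μ1 ∧ AlmostHookShaped μ3) ∨
      (AlmostHookShaped μ2 ∧ AlmostHookShaped μ3) ∨
      (AlmostHookShaped μ1 ∧ (HookShaped μ2 ∨ HookShaped μ3)) ∨
      (AlmostHookShaped μ2 ∧ (HookShaped μ1 ∨ HookShaped μ3)) ∨
      (AlmostHookShaped μ3 ∧ (HookShaped μ1 ∨ HookShaped μ2)))

/-- `A'` is the tableau obtained from `A` by deleting the box containing the largest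
entry `n = μ.card`: its shape is contained in that of `A`, has one box fewer, and its
entries agree with those of `A`. -/
def IsRestriction {μ ν : YoungDiagram} (A : SYT μ) (A' : SYT ν) : Prop :=
  ν.cells ⊆ μ.cells ∧ ν.card + 1 = μ.card ∧ ∀ c ∈ ν.cells, A'.entry c.1 c.2 = A.entry c.1 c.2

/-- A box `c` of `μ` is a corner if some standard Young tableau of shape `μ` has the
largest entry `n = μ.card` in that box. -/
def IsCornerBox (μ : YoungDiagram) (c : ℕ × ℕ) : Prop :=
  c ∈ μ ∧ ∃ A : SYT μ, A.entry c.1 c.2 = μ.card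

/-- `μ` has at least two corners. -/
def HasTwoCorners (μ : YoungDiagram) : Prop :=
  ∃ c c' : ℕ × ℕ, c ≠ c' ∧ IsCornerBox μ c ∧ IsCornerBox μ c'

/-- The number of fixed points of a permutation of `SYT μ`. -/
noncomputable def fixedCount {μ : YoungDiagram} (g : Equiv.Perm (SYT μ)) : ℕ :=
  Nat.card {A : SYT μ // g A = A}

/-! ### Standard tableaux and swaps of consecutive entries -/

theorem SYT.entry_mem {μ : YoungDiagram} (T : SYT μ) {i j : ℕ} (h : (i, j) ∈ μ) :
    T.entry i j ∈ Finset.Icc 1 μ.card := by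
  rw [← T.image_eq]
  exact Finset.mem_image_of_mem (fun c : ℕ × ℕ => T.entry c.1 c.2)
    ((YoungDiagram.mem_cells _).2 h)

theorem SYT.exists_cell {μ : YoungDiagram} (T : SYT μ) {x : ℕ} (h1 : 1 ≤ x) (h2 : x ≤ μ.card) :
    ∃ i j, (i, j) ∈ μ ∧ T.entry i j = x := by
  have hx : x ∈ Finset.Icc 1 μ.card := Finset.mem_Icc.2 ⟨h1, h2⟩
  rw [← T.image_eq, Finset.mem_image] at hx
  obtain ⟨⟨i, j⟩, hc, he⟩ := hx
  exact ⟨i, j, (YoungDiagram.mem_cells _).1 hc, he⟩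

theorem SYT.entry_inj {μ : YoungDiagram} (T : SYT μ) {i j i' j' : ℕ} (h : (i, j) ∈ μ)
    (h' : (i', j') ∈ μ) (he : T.entry i j = T.entry i' j') : i = i' ∧ j = j' := by
  have hinj : Set.InjOn (fun c : ℕ × ℕ => T.entry c.1 c.2) μ.cells := by
    rw [← Finset.card_image_iff, T.image_eq]
    simp [YoungDiagram.card]
  have := hinj (Finset.mem_coe.2 ((YoungDiagram.mem_cells _).2 h))
    (Finset.mem_coe.2 ((YoungDiagram.mem_cells _).2 h')) he
  simpa using this

theorem SYT.corner {μ : YoungDiagram} (T : SYT μ) (hμ : 1 ≤ μ.card) :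
    (0, 0) ∈ μ ∧ T.entry 0 0 = 1 := by
  obtain ⟨i, j, hc, he⟩ := T.exists_cell le_rfl hμ
  have h0 : (0, 0) ∈ μ := μ.up_left_mem (Nat.zero_le i) (Nat.zero_le j) hc
  have hi0 : (i, 0) ∈ μ := μ.up_left_mem le_rfl (Nat.zero_le j) hc
  have hle1 : T.entry 0 0 ≤ T.entry i 0 := by
    rcases Nat.eq_zero_or_pos i with rfl | hi
    · exact le_rfl
    · exact (T.col_strict 0 i 0 hi hi0).le
  have hle2 : T.entry i 0 ≤ T.entry i j := by
    rcases Nat.eq_zero_or_pos j with rfl | hj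
    · exact le_rfl
    · exact (T.row_strict i 0 j hj hc).le
  have := Finset.mem_Icc.1 (T.entry_mem h0)
  exact ⟨h0, by omega⟩

theorem swapVal_lt {k a b : ℕ} (hab : a < b) (h : ¬ (a = k ∧ b = k + 1)) :
    swapVal k a < swapVal k b := by
  unfold swapVal; split_ifs <;> omega

theorem image_swapVal_Icc {k m : ℕ} (hk : 1 ≤ k) (hm : k + 1 ≤ m) :
    (Finset.Icc 1 m).image (swapVal k) = Finset.Icc 1 m := by
  have hmem : ∀ x ∈ Finset.Icc 1 m, swapVal k x ∈ Finset.Icc 1 m := by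
    intro x hx
    rw [Finset.mem_Icc] at hx ⊢
    unfold swapVal; split_ifs <;> omega
  refine Finset.Subset.antisymm (Finset.image_subset_iff.2 hmem) fun x hx => ?_
  exact Finset.mem_image.2 ⟨swapVal k x, hmem x hx, swapVal_invol k x⟩

/-- Interchanging `k` and `k + 1` keeps a tableau standard as soon as no row and no column
contains `k` before `k + 1`. -/
theorem SYT.exists_swap {μ : YoungDiagram} (T : SYT μ) {k : ℕ} (hk : 1 ≤ k)
    (hm : k + 1 ≤ μ.card)
    (hr : ∀ i j1 j2, j1 < j2 → (i, j2) ∈ μ → ¬ (T.entry i j1 = k ∧ T.entry i j2 = k + 1))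
    (hc : ∀ i1 i2 j, i1 < i2 → (i2, j) ∈ μ → ¬ (T.entry i1 j = k ∧ T.entry i2 j = k + 1)) :
    ∃ T' : SYT μ, T'.entry = fun i j => swapVal k (T.entry i j) := by
  refine ⟨⟨fun i j => swapVal k (T.entry i j), ?_, ?_, ?_, ?_⟩, rfl⟩
  · intro i j h
    simp only [T.zero_outside i j h]
    unfold swapVal
    rw [if_neg (by omega), if_neg (by omega)]
  · exact fun i j1 j2 h h2 => swapVal_lt (T.row_strict i j1 j2 h h2) (hr i j1 j2 h h2)
  · exact fun i1 i2 j h h2 => swapVal_lt (T.col_strict i1 i2 j h h2) (hc i1 i2 j h h2)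
  · have := congrArg (Finset.image (swapVal k)) T.image_eq
    rwa [Finset.image_image, image_swapVal_Icc hk hm] at this

theorem bkFun_one {μ : YoungDiagram} (hμ : 1 ≤ μ.card) (T : SYT μ) : bkFun μ 1 T = T := by
  apply bkFun_neg
  rintro ⟨T', hT'⟩
  have h' := (T'.corner hμ).2
  simp [hT', (T.corner hμ).2, swapVal] at h'

/-! ### First rows of hook-shaped tableaux -/

theorem HookShaped.not_mem {μ : YoungDiagram} (hh : HookShaped μ) {i j : ℕ} (hi : 1 ≤ i)
    (hj : 1 ≤ j) : (i, j) ∉ μ :=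
  fun h => hh (μ.up_left_mem hi hj h)

/-- If exactly one of `k` and `k + 1` lies in the first row of a tableau of hook shape and
`k ≥ 2`, then `k` and `k + 1` share neither a row nor a column, so they can be interchanged. -/
theorem HookShaped.exists_swap {μ : YoungDiagram} (hh : HookShaped μ) (T : SYT μ) {k : ℕ}
    (hk : 2 ≤ k) (hm : k + 1 ≤ μ.card) (hne : ¬ (T.inFirstRow k ↔ T.inFirstRow (k + 1))) :
    ∃ T' : SYT μ, T'.entry = fun i j => swapVal k (T.entry i j) := by
  have h00 := T.corner (by omega)
  refine T.exists_swap (by omega) hm ?_ ?_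
  · rintro i j1 j2 hj hmem ⟨ha, hb⟩
    rcases Nat.eq_zero_or_pos i with rfl | hi
    · exact hne ⟨fun _ => ⟨j2, hmem, hb⟩, fun _ => ⟨j1, μ.up_left_mem le_rfl hj.le hmem, ha⟩⟩
    · exact hh.not_mem hi (by omega) hmem
  · rintro i1 i2 j hi hmem ⟨ha, hb⟩
    rcases Nat.eq_zero_or_pos j with rfl | hj
    · have hmem1 : (i1, 0) ∈ μ := μ.up_left_mem hi.le le_rfl hmem
      -- The corner holds `1 < k`, so both entries sit in the column strictly below the corner.
      refine hne ⟨?_, ?_⟩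
      · rintro ⟨j, hj, he⟩
        obtain ⟨rfl, rfl⟩ := T.entry_inj hmem1 hj (ha.trans he.symm)
        omega
      · rintro ⟨j, hj, he⟩
        have := (T.entry_inj hmem hj (hb.trans he.symm)).1
        omega
    · exact hh.not_mem (by omega) hj hmem

/-- On hooks, for `k ≥ 2`, the first-row values of `t_k T` are those of `T` with `k` and `k + 1`
interchanged, also when `t_k` fixes `T`. -/
theorem inFirstRow_bkFun {μ : YoungDiagram} (hh : HookShaped μ) (T : SYT μ) {k : ℕ}
    (hk : 2 ≤ k) (hm : k + 1 ≤ μ.card) (x : ℕ) :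
    (bkFun μ k T).inFirstRow x ↔ T.inFirstRow (swapVal k x) := by
  by_cases h : ∃ T' : SYT μ, T'.entry = fun i j => swapVal k (T.entry i j)
  · unfold SYT.inFirstRow
    simp only [bkFun_pos h, (swapVal_invol k).eq_iff, eq_comm]
  · rw [bkFun_neg h]
    have hiff : T.inFirstRow k ↔ T.inFirstRow (k + 1) := by
      by_contra hne
      exact h (hh.exists_swap T hk hm hne)
    unfold swapVal
    split_ifs with h1 h2
    · rw [h1, hiff]
    · rw [h2, hiff]
    · rfl

theorem card_sharedFirstRow_bkFun {μ1 μ2 : YoungDiagram} (hcard : μ2.card = μ1.card)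
    (hh1 : HookShaped μ1) (hh2 : HookShaped μ2) (A : SYT μ1) (B : SYT μ2) {k : ℕ}
    (hk : 1 ≤ k) (hm : k + 1 ≤ μ1.card) :
    (sharedFirstRow (bkFun μ1 k A) (bkFun μ2 k B)).card = (sharedFirstRow A B).card := by
  rcases hk.eq_or_lt with rfl | hk2
  · rw [bkFun_one (by omega), bkFun_one (by omega)]
  · rw [← Finset.card_image_of_injective (sharedFirstRow A B) (swapVal_invol k).injective]
    congr 1
    ext x
    have hIcc : swapVal k x ∈ Finset.Icc 1 μ1.card ↔ x ∈ Finset.Icc 1 μ1.card := by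
      simp only [Finset.mem_Icc]
      unfold swapVal; split_ifs <;> omega
    have himg : x ∈ (sharedFirstRow A B).image (swapVal k) ↔
        swapVal k x ∈ sharedFirstRow A B := by
      rw [Finset.mem_image]
      constructor
      · rintro ⟨y, hy, rfl⟩
        rwa [swapVal_invol k y]
      · exact fun h => ⟨_, h, swapVal_invol k x⟩
    rw [himg]
    unfold sharedFirstRow
    simp only [Finset.mem_filter, hIcc, inFirstRow_bkFun hh1 A hk2 hm,
      inFirstRow_bkFun hh2 B hk2 (hcard ▸ hm)]

/-- Theorem. For hook-shaped partitions `μ1, μ2` of `n` and tableaux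
`A ∈ SYT(μ1)`, `B ∈ SYT(μ2)`, the cardinality of the set `S_{A,B}` of values lying
in the first rows of both `A` and `B` is invariant under the diagonal `C_n`-action. -/
theorem sharedFirstRow_card_invariant (n : ℕ) (μ1 μ2 : YoungDiagram)
    (h1 : μ1.card = n) (h2 : μ2.card = n)
    (hh1 : HookShaped μ1) (hh2 : HookShaped μ2)
    (A : SYT μ1) (B : SYT μ2) :
    ∀ g ∈ BKpairGroup μ1 μ2,
      (sharedFirstRow (g (A, B)).1 (g (A, B)).2).card = (sharedFirstRow A B).card := by
  subst h1
  intro g hg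
  suffices h : ∀ p : SYT μ1 × SYT μ2,
      (sharedFirstRow (g p).1 (g p).2).card = (sharedFirstRow p.1 p.2).card from h (A, B)
  induction hg using Subgroup.closure_induction with
  | mem x hx =>
    obtain ⟨k, hk, rfl⟩ := hx
    rw [Set.mem_Icc] at hk
    exact fun p => card_sharedFirstRow_bkFun h2 hh1 hh2 p.1 p.2 hk.1 (by omega)
  | one => exact fun p => rfl
  | mul x y _ _ ihx ihy => exact fun p => (ihx (y p)).trans (ihy p)
  | inv x _ ih =>
    intro p
    rw [← ih (x⁻¹ p), ← Equiv.Perm.mul_apply, mul_inv_cancel, Equiv.Perm.one_apply]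
end

section
/- Let (λ1, λ2) be a viable pair of partitions of n which is not base case, and let A ∈ SYT(λ1) and B ∈ SYT(λ2). If the pair of tableaux (A, B) is viable, then there exists g ∈ C_n (acting diagonally) such that the pair (g(A)∖n, g(B)∖n) of tableaux on n−1 boxes is also viable. -/
namespace SYT

/-! ### Entries of a standard Young tableau -/

variable {μ : YoungDiagram}

theorem entry_mem_s6 (A : SYT μ) {i j : ℕ} (h : (i, j) ∈ μ) :
    1 ≤ A.entry i j ∧ A.entry i j ≤ μ.card := by
  have : A.entry i j ∈ μ.cells.image (fun c => A.entry c.1 c.2) :=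
    Finset.mem_image.2 ⟨(i, j), h, rfl⟩
  rw [A.image_eq] at this
  exact Finset.mem_Icc.1 this

theorem mem_of_pos (A : SYT μ) {i j : ℕ} (h : 0 < A.entry i j) : (i, j) ∈ μ := by
  by_contra h'
  have := A.zero_outside i j h'
  omega

theorem entry_le (A : SYT μ) (i j : ℕ) : A.entry i j ≤ μ.card := by
  by_cases h : (i, j) ∈ μ
  · exact (A.entry_mem_s6 h).2
  · rw [A.zero_outside i j h]; exact Nat.zero_le _

theorem exists_entry (A : SYT μ) {k : ℕ} (h1 : 1 ≤ k) (h2 : k ≤ μ.card) :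
    ∃ i j, A.entry i j = k := by
  have : k ∈ μ.cells.image (fun c => A.entry c.1 c.2) := by
    rw [A.image_eq]; exact Finset.mem_Icc.2 ⟨h1, h2⟩
  obtain ⟨c, _, hc⟩ := Finset.mem_image.1 this
  exact ⟨c.1, c.2, hc⟩

theorem entry_inj_s6 (A : SYT μ) {i j i' j' : ℕ} (h : A.entry i j = A.entry i' j')
    (hpos : 0 < A.entry i j) : i = i' ∧ j = j' := by
  have hc : (μ.cells.image (fun c => A.entry c.1 c.2)).card = μ.cells.card := by
    rw [A.image_eq]; simp [YoungDiagram.card]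
  have hinj := Finset.card_image_iff.1 hc
  have h1 := A.mem_of_pos hpos
  have h2 := A.mem_of_pos (h ▸ hpos)
  have := hinj (show (i, j) ∈ (μ.cells : Set (ℕ × ℕ)) from h1)
    (show (i', j') ∈ (μ.cells : Set (ℕ × ℕ)) from h2) h
  exact ⟨congrArg Prod.fst this, congrArg Prod.snd this⟩

theorem entry_mono (A : SYT μ) {i j i' j' : ℕ} (hi : i ≤ i') (hj : j ≤ j')
    (h : (i', j') ∈ μ) : A.entry i j ≤ A.entry i' j' := by
  have h1 : A.entry i j ≤ A.entry i j' := by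
    rcases hj.eq_or_lt with rfl | hj
    · exact le_rfl
    · exact (A.row_strict i j j' hj (μ.up_left_mem hi le_rfl h)).le
  have h2 : A.entry i j' ≤ A.entry i' j' := by
    rcases hi.eq_or_lt with rfl | hi
    · exact le_rfl
    · exact (A.col_strict i i' j' hi h).le
  exact h1.trans h2

/-- The entry `2` of a tableau of non-hook shape does not lie on the diagonal. -/
theorem diag_ne_two (A : SYT μ) (h11 : (1, 1) ∈ μ) (i : ℕ) : A.entry i i ≠ 2 := by
  intro h
  have hm : (i, i) ∈ μ := A.mem_of_pos (by omega)
  have h01 : (0, 1) ∈ μ := μ.up_left_mem (by omega) le_rfl h11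
  have h00 : (0, 0) ∈ μ := μ.up_left_mem le_rfl (by omega) h01
  have a := (A.entry_mem_s6 h00).1
  have b := A.row_strict 0 0 1 (by omega) h01
  have c := A.col_strict 0 1 1 (by omega) h11
  rcases Nat.eq_zero_or_pos i with rfl | hi
  · obtain ⟨a', b', h1⟩ := A.exists_entry (k := 1) le_rfl ((A.entry_mem_s6 h00).1.trans
      (A.entry_mem_s6 h00).2)
    have := A.entry_mono (Nat.zero_le a') (Nat.zero_le b') (A.mem_of_pos (by omega))
    omega
  · have : A.entry 1 1 ≤ A.entry i i := A.entry_mono hi hi hm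
    omega

theorem card_transpose (μ : YoungDiagram) : μ.transpose.card = μ.card := by
  simp [YoungDiagram.card, YoungDiagram.transpose]

/-- The transposed tableau. -/
def transpose (A : SYT μ) : SYT μ.transpose where
  entry i j := A.entry j i
  zero_outside i j h := A.zero_outside j i (by simpa [YoungDiagram.mem_transpose] using h)
  row_strict i j1 j2 hj h :=
    A.col_strict j1 j2 i hj (by simpa [YoungDiagram.mem_transpose] using h)
  col_strict i1 i2 j hi h :=
    A.row_strict j i1 i2 hi (by simpa [YoungDiagram.mem_transpose] using h)
  image_eq := by
    rw [card_transpose, ← A.image_eq]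
    ext x
    simp only [Finset.mem_image, YoungDiagram.mem_cells, YoungDiagram.mem_transpose]
    constructor
    · rintro ⟨c, hc, rfl⟩
      exact ⟨c.swap, hc, rfl⟩
    · rintro ⟨c, hc, rfl⟩
      exact ⟨c.swap, by simpa using hc, rfl⟩

@[simp] theorem transpose_entry (A : SYT μ) (i j : ℕ) : A.transpose.entry i j = A.entry j i := rfl

end SYT

/-! ### Bender–Knuth involutions -/

/-- `t_k` interchanges `k` and `k + 1` whenever `k + 1` lies neither directly to the right of
nor directly below `k`. -/
theorem bkFun_swap {μ : YoungDiagram} (A : SYT μ) {k i j i' j' : ℕ} (hk : 1 ≤ k)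
    (h1 : A.entry i j = k) (h2 : A.entry i' j' = k + 1)
    (hr : ¬ (i' = i ∧ j' = j + 1)) (hd : ¬ (i' = i + 1 ∧ j' = j)) :
    (bkFun μ k A).entry = fun a b => swapVal k (A.entry a b) := by
  have hn : k + 1 ≤ μ.card := h2 ▸ A.entry_le i' j'
  -- `swapVal k` preserves `x < y` except for `x = k`, `y = k + 1`.
  have key : ∀ x y, x < y → ¬ (x = k ∧ y = k + 1) → swapVal k x < swapVal k y := by
    intro x y hxy hne
    unfold swapVal
    split_ifs <;> omega
  apply bkFun_pos
  refine ⟨⟨fun a b => swapVal k (A.entry a b), ?_, ?_, ?_, ?_⟩, rfl⟩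
  · intro a b hab
    simp only [A.zero_outside a b hab]
    grind [swapVal]
  · intro a b1 b2 hb hm
    apply key _ _ (A.row_strict a b1 b2 hb hm)
    rintro ⟨e1, e2⟩
    obtain ⟨rfl, rfl⟩ := A.entry_inj_s6 (e1.trans h1.symm) (by omega)
    obtain ⟨rfl, rfl⟩ := A.entry_inj_s6 (e2.trans h2.symm) (by omega)
    have hlt : b1 + 1 < b2 := by omega
    have := A.row_strict a b1 (b1 + 1) (by omega) (μ.up_left_mem le_rfl hlt.le hm)
    have := A.row_strict a (b1 + 1) b2 hlt hm
    omega
  · intro a1 a2 b ha hm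
    apply key _ _ (A.col_strict a1 a2 b ha hm)
    rintro ⟨e1, e2⟩
    obtain ⟨rfl, rfl⟩ := A.entry_inj_s6 (e1.trans h1.symm) (by omega)
    obtain ⟨rfl, rfl⟩ := A.entry_inj_s6 (e2.trans h2.symm) (by omega)
    have hlt : a1 + 1 < a2 := by omega
    have := A.col_strict a1 (a1 + 1) b (by omega) (μ.up_left_mem hlt.le le_rfl hm)
    have := A.col_strict (a1 + 1) a2 b hlt hm
    omega
  · have : μ.cells.image (fun c => swapVal k (A.entry c.1 c.2)) =
        (μ.cells.image (fun c => A.entry c.1 c.2)).image (swapVal k) := by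
      rw [Finset.image_image]; rfl
    rw [this, A.image_eq]
    ext x
    simp only [Finset.mem_image, Finset.mem_Icc]
    constructor
    · rintro ⟨y, hy, rfl⟩
      unfold swapVal
      split_ifs <;> omega
    · intro hx
      refine ⟨swapVal k x, ?_, swapVal_invol k x⟩
      unfold swapVal
      split_ifs <;> omega

theorem bkFun_cases {μ : YoungDiagram} (k : ℕ) (A : SYT μ) :
    bkFun μ k A = A ∨ (bkFun μ k A).entry = fun a b => swapVal k (A.entry a b) := by
  by_cases h : ∃ T' : SYT μ, T'.entry = fun i j => swapVal k (A.entry i j)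
  · exact Or.inr (bkFun_pos h)
  · exact Or.inl (bkFun_neg h)

theorem bkFun_transpose {μ : YoungDiagram} (k : ℕ) (A : SYT μ) :
    (bkFun μ.transpose k A.transpose).entry = (bkFun μ k A).transpose.entry := by
  by_cases h : ∃ T' : SYT μ, T'.entry = fun i j => swapVal k (A.entry i j)
  · have h' : ∃ T' : SYT μ.transpose, T'.entry = fun i j => swapVal k (A.transpose.entry i j) := by
      obtain ⟨T, hT⟩ := h
      refine ⟨T.transpose, ?_⟩
      funext i j
      simp [hT]
    rw [bkFun_pos h']
    funext i j
    simp [bkFun_pos h]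
  · have h' : ¬ ∃ T' : SYT μ.transpose,
        T'.entry = fun i j => swapVal k (A.transpose.entry i j) := by
      rintro ⟨T, hT⟩
      -- transposing `T` gives a tableau whose shape is only propositionally equal to `μ`
      have hμ : μ.transpose.transpose = μ := μ.transpose_transpose
      apply h
      have : ∃ T' : SYT μ.transpose.transpose,
          T'.entry = fun i j => swapVal k (A.entry i j) := by
        refine ⟨T.transpose, ?_⟩
        funext i j
        simp [hT]
      rwa [hμ] at this
    rw [bkFun_neg h', bkFun_neg h]

/-- One simultaneous Bender–Knuth move `t_k`, `1 ≤ k ≤ n - 1`. -/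
def BKStep {μ1 μ2 : YoungDiagram} (x y : SYT μ1 × SYT μ2) : Prop :=
  ∃ k, 1 ≤ k ∧ k ≤ μ1.card - 1 ∧ y = (bkFun μ1 k x.1, bkFun μ2 k x.2)

/-- `y` is obtained from `x` by a sequence of simultaneous Bender–Knuth moves. -/
def BKReach {μ1 μ2 : YoungDiagram} : SYT μ1 × SYT μ2 → SYT μ1 × SYT μ2 → Prop :=
  Relation.ReflTransGen BKStep

theorem BKReach.exists_mem {μ1 μ2 : YoungDiagram} {x y : SYT μ1 × SYT μ2} (h : BKReach x y) :
    ∃ g ∈ BKpairGroup μ1 μ2, g x = y := by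
  induction h with
  | refl => exact ⟨1, one_mem _, rfl⟩
  | tail _ hs ih =>
    obtain ⟨g, hg, rfl⟩ := ih
    obtain ⟨k, hk1, hk2, rfl⟩ := hs
    exact ⟨BKpair μ1 μ2 k * g,
      mul_mem (Subgroup.subset_closure ⟨k, ⟨hk1, hk2⟩, rfl⟩) hg, rfl⟩

theorem BKReach.of_transpose {μ1 μ2 : YoungDiagram} {A : SYT μ1} {B : SYT μ2}
    {y : SYT μ1 × SYT μ2.transpose} (h : BKReach (A, B.transpose) y) :
    ∃ B2 : SYT μ2, BKReach (A, B) (y.1, B2) ∧ y.2 = B2.transpose := by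
  induction h with
  | refl => exact ⟨B, Relation.ReflTransGen.refl, rfl⟩
  | tail _ hs ih =>
    obtain ⟨B2, hr, he⟩ := ih
    obtain ⟨k, hk1, hk2, rfl⟩ := hs
    refine ⟨bkFun μ2 k B2, hr.tail ⟨k, hk1, hk2, rfl⟩, ?_⟩
    apply SYT.ext'
    rw [← bkFun_transpose, he]

/-! ### Truncated tableaux -/

/-- The value left in a box after deletion of the entry `n`; an empty box has value `0`. -/
def trunc (n x : ℕ) : ℕ := if x < n then x else 0

/-- `A ∖ n` and `B ∖ n` are the same filling. -/
def TruncEq (n : ℕ) {μ1 μ2 : YoungDiagram} (A : SYT μ1) (B : SYT μ2) : Prop :=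
  ∀ i j, trunc n (A.entry i j) = trunc n (B.entry i j)

theorem TruncEq.symm {n : ℕ} {μ1 μ2 : YoungDiagram} {A : SYT μ1} {B : SYT μ2}
    (h : TruncEq n A B) : TruncEq n B A := fun i j => (h i j).symm

theorem TruncEq.eq_of_lt {n : ℕ} {μ1 μ2 : YoungDiagram} {A : SYT μ1} {B : SYT μ2}
    (h : TruncEq n A B) {i j : ℕ} (h0 : 0 < A.entry i j) (hn : A.entry i j < n) :
    B.entry i j = A.entry i j := by
  have := h i j
  unfold trunc at this
  split_ifs at this <;> omega

theorem IsRestriction.entry_eq {μ ν : YoungDiagram} {A : SYT μ} {A' : SYT ν}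
    (h : IsRestriction A A') (i j : ℕ) : A'.entry i j = trunc μ.card (A.entry i j) := by
  obtain ⟨_, hc, he⟩ := h
  by_cases hm : (i, j) ∈ ν
  · have e : A'.entry i j = A.entry i j := he (i, j) hm
    have := (A'.entry_mem_s6 hm).2
    unfold trunc
    rw [if_pos (by omega), e]
  · rw [A'.zero_outside i j hm]
    unfold trunc
    split_ifs with hlt
    · by_contra h0
      -- a value in `1, …, n - 1` already occurs in a box of `ν`, and occurs only once
      obtain ⟨a, b, hab⟩ := A'.exists_entry (k := A.entry i j) (by omega) (by omega)
      have hm' := A'.mem_of_pos (i := a) (j := b) (by omega)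
      have e : A'.entry a b = A.entry a b := he (a, b) hm'
      obtain ⟨rfl, rfl⟩ := A.entry_inj_s6 (e.symm.trans hab) (by omega)
      exact hm hm'
    · rfl

/-- A shape which is neither a hook nor almost a hook does not become a hook when a box is
removed. -/
theorem IsRestriction.not_hookShaped {μ ν : YoungDiagram} {A : SYT μ} {A' : SYT ν}
    (h : IsRestriction A A') (hh : ¬ HookShaped μ) (ha : ¬ AlmostHookShaped μ) :
    ¬ HookShaped ν := by
  intro hν
  have h11 : (1, 1) ∈ μ := not_not.1 hh
  have e := h.entry_eq 1 1
  rw [A'.zero_outside 1 1 hν] at e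
  have hp := A.entry_mem_s6 h11
  unfold trunc at e
  split_ifs at e with hlt
  · omega
  · apply ha
    refine ⟨h11, fun hm => ?_, fun hm => ?_⟩
    · have := A.row_strict 1 1 2 (by omega) hm
      have := A.entry_le 1 2
      omega
    · have := A.col_strict 1 2 1 (by omega) hm
      have := A.entry_le 2 1
      omega

theorem four_le_card {μ : YoungDiagram} (h11 : (1, 1) ∈ μ) : 4 ≤ μ.card := by
  have h01 : (0, 1) ∈ μ := μ.up_left_mem (by omega) le_rfl h11
  have h10 : (1, 0) ∈ μ := μ.up_left_mem le_rfl (by omega) h11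
  have h00 : (0, 0) ∈ μ := μ.up_left_mem le_rfl (by omega) h01
  have : ({(0, 0), (0, 1), (1, 0), (1, 1)} : Finset (ℕ × ℕ)) ⊆ μ.cells := by
    intro c hc
    simp only [Finset.mem_insert, Finset.mem_singleton] at hc
    rcases hc with rfl | rfl | rfl | rfl <;> assumption
  exact Finset.card_le_card this

/-! ### Separating two tableaux with the same truncation -/

/-- The conclusion sought for a pair of tableaux: after deletion of `n` they are neither equal
nor transposes of each other. -/
def Separated (n : ℕ) {μ1 μ2 : YoungDiagram} (A : SYT μ1) (B : SYT μ2) : Prop :=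
  ¬ TruncEq n A B ∧ ¬ ∀ i j, trunc n (B.entry i j) = trunc n (A.entry j i)

theorem Separated.symm {n : ℕ} {μ1 μ2 : YoungDiagram} {A : SYT μ1} {B : SYT μ2}
    (h : Separated n A B) : Separated n B A :=
  ⟨fun h' => h.1 h'.symm, fun h' => h.2 fun i j => (h' j i).symm⟩

/-- Tableaux of non-hook shape sharing the box of the entry `2` are not transposes of each other,
even after deletion of `n`. -/
theorem not_transpose_of_two {n : ℕ} (hn : 4 ≤ n) {μ1 μ2 : YoungDiagram} {A : SYT μ1} {B : SYT μ2}
    (h11 : (1, 1) ∈ μ2) {i j : ℕ} (hA : A.entry i j = 2) (hB : B.entry i j = 2) :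
    ¬ ∀ i j, trunc n (B.entry i j) = trunc n (A.entry j i) := by
  intro h
  have e := h j i
  rw [hA] at e
  have e2 : B.entry j i = 2 := by
    unfold trunc at e
    split_ifs at e <;> omega
  obtain ⟨rfl, -⟩ := B.entry_inj_s6 (hB.trans e2.symm) (by omega)
  exact B.diag_ne_two h11 _ hB

/-- If `n - 1` is not adjacent to `n` in `B`, then `t_{n-1}` separates `A` and `B`. -/
theorem final_step_aux {n : ℕ} {μ1 μ2 : YoungDiagram} (hc1 : μ1.card = n)
    (h11 : (1, 1) ∈ μ2) (hn : 4 ≤ n) {A : SYT μ1} {B : SYT μ2} (hT : TruncEq n A B)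
    {a1 b1 a2 b2 i j : ℕ} (hA : A.entry a1 b1 = n) (hB : B.entry a2 b2 = n)
    (hne : ¬ (a1 = a2 ∧ b1 = b2)) (hp : A.entry i j = n - 1)
    (hr : ¬ (a2 = i ∧ b2 = j + 1)) (hd : ¬ (a2 = i + 1 ∧ b2 = j)) :
    Separated n (bkFun μ1 (n - 1) A) (bkFun μ2 (n - 1) B) := by
  have hpB : B.entry i j = n - 1 := by rw [hT.eq_of_lt (by omega) (by omega), hp]
  have eB := bkFun_swap B (k := n - 1) (by omega) hpB (by omega) hr hd
  obtain ⟨x, y, h2⟩ := A.exists_entry (k := 2) (by omega) (by omega)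
  have h2B : B.entry x y = 2 := by rw [hT.eq_of_lt (by omega) (by omega), h2]
  have s2 : swapVal (n - 1) 2 = 2 := by unfold swapVal; split_ifs <;> omega
  refine ⟨fun h => ?_, not_transpose_of_two hn (i := x) (j := y) h11 ?_ ?_⟩
  · rcases bkFun_cases (n - 1) A with eA | eA
    · -- only `B` moved: `n - 1` is still in its box in `A`, but this box now carries `n` in `B`
      have := h i j
      rw [eA, eB, hp] at this
      simp only [hpB] at this
      unfold trunc swapVal at this
      split_ifs at this <;> omega
    · -- both moved: `n - 1` is now in the former box of `n` in `A`, which is empty in `B`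
      have h' := h a1 b1
      have h0 := hT a1 b1
      have hBn : B.entry a1 b1 ≠ n := fun e => hne (B.entry_inj_s6 (e.trans hB.symm) (by omega))
      rw [eA, eB] at h'
      simp only [hA] at h' h0
      unfold trunc swapVal at h'
      unfold trunc at h0
      split_ifs at h0 h' <;> omega
  · rcases bkFun_cases (n - 1) A with eA | eA
    · rw [eA, h2]
    · rw [eA]; simp only [h2, s2]
  · rw [eB]; simp only [h2B, s2]

/-- If `n - 1` is adjacent to `n` in at most one of `A`, `B`, then `t_{n-1}` separates them. -/
theorem final_step {n : ℕ} {μ1 μ2 : YoungDiagram} (hc1 : μ1.card = n) (hc2 : μ2.card = n)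
    (h11 : (1, 1) ∈ μ1) (h11' : (1, 1) ∈ μ2) {A : SYT μ1} {B : SYT μ2} (hT : TruncEq n A B)
    {a1 b1 a2 b2 i j : ℕ} (hA : A.entry a1 b1 = n) (hB : B.entry a2 b2 = n)
    (hne : ¬ (a1 = a2 ∧ b1 = b2)) (hp : A.entry i j = n - 1)
    (hadj : ¬ (((a1 = i ∧ b1 = j + 1) ∨ (a1 = i + 1 ∧ b1 = j)) ∧
      ((a2 = i ∧ b2 = j + 1) ∨ (a2 = i + 1 ∧ b2 = j)))) :
    ∃ y, BKReach (A, B) y ∧ Separated n y.1 y.2 := by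
  have hn : 4 ≤ n := hc1 ▸ four_le_card h11
  refine ⟨(bkFun μ1 (n - 1) A, bkFun μ2 (n - 1) B),
    Relation.ReflTransGen.single ⟨n - 1, by omega, by omega, rfl⟩, ?_⟩
  by_cases h : (a2 = i ∧ b2 = j + 1) ∨ (a2 = i + 1 ∧ b2 = j)
  · have h' : ¬ ((a1 = i ∧ b1 = j + 1) ∨ (a1 = i + 1 ∧ b1 = j)) := fun h' => hadj ⟨h', h⟩
    rw [not_or] at h'
    have hpB : B.entry i j = n - 1 := by rw [hT.eq_of_lt (by omega) (by omega), hp]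
    exact (final_step_aux hc2 h11 hn hT.symm hB hA (by omega) hpB h'.1 h'.2).symm
  · rw [not_or] at h
    exact final_step_aux hc1 h11' hn hT hA hB hne hp h.1 h.2

/-- The box `(a, b)` is a corner of the shape of `A ∖ n`: it belongs to that shape, and its right
and lower neighbours in `A` are empty or carry `n`. -/
def TruncCorner (n : ℕ) {μ : YoungDiagram} (A : SYT μ) (a b : ℕ) : Prop :=
  (0 < A.entry a b ∧ A.entry a b < n) ∧
    trunc n (A.entry a (b + 1)) = 0 ∧ trunc n (A.entry (a + 1) b) = 0

/-- If `n` is in box `(i + 1, j + 1)` of `A`, then the last box of row `i` is a corner of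
`A ∖ n`. -/
theorem exists_corner_row {n : ℕ} {μ : YoungDiagram} (hc : μ.card = n) (A : SYT μ) {i j : ℕ}
    (h : A.entry (i + 1) (j + 1) = n) (hn : 0 < n) : ∃ b, TruncCorner n A i b := by
  have hm := A.mem_of_pos (h ▸ hn)
  have hm' : (i, j + 1) ∈ μ := μ.up_left_mem (by omega) le_rfl hm
  have hlen : j + 1 < μ.rowLen i := YoungDiagram.mem_iff_lt_rowLen.1 hm'
  refine ⟨μ.rowLen i - 1, ?_, ?_, ?_⟩
  · have hb : (i, μ.rowLen i - 1) ∈ μ := YoungDiagram.mem_iff_lt_rowLen.2 (by omega)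
    refine ⟨(A.entry_mem_s6 hb).1, lt_of_le_of_ne (hc ▸ A.entry_le _ _) fun e => ?_⟩
    have := A.entry_inj_s6 (e.trans h.symm) (by omega)
    omega
  · have : (i, μ.rowLen i - 1 + 1) ∉ μ := by
      rw [YoungDiagram.mem_iff_lt_rowLen]; omega
    rw [A.zero_outside _ _ this]
    simp [trunc]
  · by_cases hb : (i + 1, μ.rowLen i - 1) ∈ μ
    · have := A.entry_mono (i := i + 1) (j := j + 1) le_rfl (by omega) hb
      unfold trunc
      rw [if_neg (by omega)]
    · rw [A.zero_outside _ _ hb]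
      simp [trunc]

theorem exists_corner_col {n : ℕ} {μ : YoungDiagram} (hc : μ.card = n) (A : SYT μ) {i j : ℕ}
    (h : A.entry (i + 1) (j + 1) = n) (hn : 0 < n) : ∃ a, TruncCorner n A a j := by
  obtain ⟨a, h1, h2, h3⟩ := exists_corner_row ((SYT.card_transpose μ).trans hc) A.transpose
    (i := j) (j := i) h hn
  exact ⟨a, h1, h3, h2⟩

theorem TruncCorner.congr {n : ℕ} {μ1 μ2 : YoungDiagram} {A : SYT μ1} {B : SYT μ2}
    (hT : TruncEq n A B) {a b : ℕ} (h : TruncCorner n A a b) : TruncCorner n B a b := by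
  obtain ⟨h1, h2, h3⟩ := h
  refine ⟨?_, ?_, ?_⟩
  · rw [hT.eq_of_lt h1.1 h1.2]; exact h1
  · rw [← hT]; exact h2
  · rw [← hT]; exact h3

/-- `t_k` raises the entry `k` of a corner of `A ∖ n` to `k + 1`, provided `k + 1 < n`. -/
theorem TruncCorner.bkFun_eq {n : ℕ} {μ : YoungDiagram} (hc : μ.card = n) {A : SYT μ} {a b k : ℕ}
    (h : TruncCorner n A a b) (hk : A.entry a b = k) (hkn : k + 1 < n) :
    (bkFun μ k A).entry = fun i j => swapVal k (A.entry i j) := by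
  obtain ⟨h1, h2, h3⟩ := h
  obtain ⟨x, y, hxy⟩ := A.exists_entry (k := k + 1) (by omega) (by omega)
  have ht : trunc n (k + 1) ≠ 0 := by unfold trunc; rw [if_pos hkn]; omega
  refine bkFun_swap A (by omega) hk hxy ?_ ?_
  · rintro ⟨rfl, rfl⟩
    exact ht (hxy ▸ h2)
  · rintro ⟨rfl, rfl⟩
    exact ht (hxy ▸ h3)

theorem trunc_swapVal {n k : ℕ} (hk : 0 < k) (hkn : k + 1 < n) (x : ℕ) :
    trunc n (swapVal k x) = swapVal k (trunc n x) := by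
  grind [trunc, swapVal]

/-- The entry `n - 1` can be brought to any corner of the common truncation `A ∖ n = B ∖ n`
without moving `n`. -/
theorem exists_move {n : ℕ} {μ1 μ2 : YoungDiagram} (hc1 : μ1.card = n) (hc2 : μ2.card = n)
    {a b a1 b1 a2 b2 : ℕ} (d : ℕ) : ∀ (A : SYT μ1) (B : SYT μ2), TruncEq n A B →
      TruncCorner n A a b → A.entry a b + d + 1 = n → A.entry a1 b1 = n → B.entry a2 b2 = n →
      ∃ A2 B2, BKReach (A, B) (A2, B2) ∧ TruncEq n A2 B2 ∧ A2.entry a b = n - 1 ∧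
        A2.entry a1 b1 = n ∧ B2.entry a2 b2 = n := by
  induction d with
  | zero =>
    intro A B hT _ hd hA hB
    exact ⟨A, B, Relation.ReflTransGen.refl, hT, by omega, hA, hB⟩
  | succ d ih =>
    intro A B hT hC hd hA hB
    obtain ⟨k, hk⟩ : ∃ k, A.entry a b = k := ⟨_, rfl⟩
    have hk0 : 0 < k := hk ▸ hC.1.1
    have hkn : k + 1 < n := by omega
    have hkB : B.entry a b = k := by rw [hT.eq_of_lt hC.1.1 hC.1.2, hk]
    have eA := hC.bkFun_eq hc1 hk hkn
    have eB := (hC.congr hT).bkFun_eq hc2 hkB hkn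
    have sn : swapVal k n = n := by unfold swapVal; split_ifs <;> omega
    have s0 : swapVal k 0 = 0 := by grind [swapVal]
    have sk : swapVal k k = k + 1 := by simp [swapVal]
    have e1 : (bkFun μ1 k A).entry a b = k + 1 := by rw [eA]; simp only [hk, sk]
    have hT' : TruncEq n (bkFun μ1 k A) (bkFun μ2 k B) := by
      intro i j
      rw [eA, eB]
      simp only [trunc_swapVal hk0 hkn, hT i j]
    have hC' : TruncCorner n (bkFun μ1 k A) a b := by
      refine ⟨by omega, ?_, ?_⟩
      · rw [eA]; simp only [trunc_swapVal hk0 hkn, hC.2.1, s0]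
      · rw [eA]; simp only [trunc_swapVal hk0 hkn, hC.2.2, s0]
    obtain ⟨A2, B2, hr, hrest⟩ := ih (bkFun μ1 k A) (bkFun μ2 k B) hT' hC' (by omega)
      (by rw [eA]; simp only [hA, sn]) (by rw [eB]; simp only [hB, sn])
    exact ⟨A2, B2, Relation.ReflTransGen.head ⟨k, hk0, by omega, rfl⟩ hr, hrest⟩

/-- If `n` is directly to the right of the box `(i, j)` in `A` and directly below it in `B`, the
common truncation `A ∖ n = B ∖ n` has a corner other than `(i, j)`. -/
theorem exists_other_corner {n : ℕ} {μ1 μ2 : YoungDiagram} (hc1 : μ1.card = n)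
    (hc2 : μ2.card = n) (h11 : (1, 1) ∈ μ1) {A : SYT μ1} {B : SYT μ2} (hT : TruncEq n A B)
    {i j : ℕ} (hA : A.entry i (j + 1) = n) (hB : B.entry (i + 1) j = n) :
    ∃ a b, TruncCorner n A a b ∧ ¬ (a = i ∧ b = j) := by
  have hn : 4 ≤ n := hc1 ▸ four_le_card h11
  rcases i with _ | i
  · rcases j with _ | j
    · -- `n` cannot be in box `(0, 1)`, since box `(1, 1)` carries a larger entry
      have := A.col_strict 0 1 1 (by omega) h11
      have := A.entry_le 1 1
      simp only [Nat.zero_add] at hA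
      omega
    · obtain ⟨a, ha⟩ := exists_corner_col hc2 B hB (by omega)
      exact ⟨a, j, ha.congr hT.symm, by omega⟩
  · obtain ⟨b, hb⟩ := exists_corner_row hc1 A hA (by omega)
    exact ⟨i, b, hb, by omega⟩

/-- Distinct tableaux of non-hook shapes with equal truncations can be separated. -/
theorem exists_separated {n : ℕ} {μ1 μ2 : YoungDiagram} (hc1 : μ1.card = n) (hc2 : μ2.card = n)
    (h11 : (1, 1) ∈ μ1) (h11' : (1, 1) ∈ μ2) {A : SYT μ1} {B : SYT μ2} (hT : TruncEq n A B)
    (hAB : A.entry ≠ B.entry) : ∃ y, BKReach (A, B) y ∧ Separated n y.1 y.2 := by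
  have hn : 4 ≤ n := hc1 ▸ four_le_card h11
  obtain ⟨a1, b1, hA⟩ := A.exists_entry (k := n) (by omega) (by omega)
  obtain ⟨a2, b2, hB⟩ := B.exists_entry (k := n) (by omega) (by omega)
  obtain ⟨i, j, hp⟩ := A.exists_entry (k := n - 1) (by omega) (by omega)
  have hne : ¬ (a1 = a2 ∧ b1 = b2) := by
    rintro ⟨rfl, rfl⟩
    apply hAB
    funext x y
    by_cases hxy : x = a1 ∧ y = b1
    · obtain ⟨rfl, rfl⟩ := hxy
      rw [hA, hB]
    · have hA' : A.entry x y ≠ n := fun e => hxy (A.entry_inj_s6 (e.trans hA.symm) (by omega))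
      have hB' : B.entry x y ≠ n := fun e => hxy (B.entry_inj_s6 (e.trans hB.symm) (by omega))
      have l1 := A.entry_le x y
      have l2 := B.entry_le x y
      have := hT x y
      unfold trunc at this
      split_ifs at this <;> omega
  by_cases hadj : ((a1 = i ∧ b1 = j + 1) ∨ (a1 = i + 1 ∧ b1 = j)) ∧
      ((a2 = i ∧ b2 = j + 1) ∨ (a2 = i + 1 ∧ b2 = j))
  · have hcor : ∃ a b, TruncCorner n A a b ∧ ¬ (a = i ∧ b = j) := by
      obtain ⟨⟨rfl, rfl⟩ | ⟨rfl, rfl⟩, ⟨rfl, rfl⟩ | ⟨rfl, rfl⟩⟩ := hadj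
      · omega
      · exact exists_other_corner hc1 hc2 h11 hT hA hB
      · obtain ⟨a, b, h, h'⟩ := exists_other_corner hc2 hc1 h11' hT.symm hB hA
        exact ⟨a, b, h.congr hT.symm, h'⟩
      · omega
    obtain ⟨a, b, hC, hab⟩ := hcor
    have := hC.1
    obtain ⟨A2, B2, hr, hT2, hp2, hA2, hB2⟩ :=
      exists_move hc1 hc2 (n - 1 - A.entry a b) A B hT hC (by omega) hA hB
    obtain ⟨y, hy, hs⟩ := final_step hc1 hc2 h11 h11' hT2 hA2 hB2 hne hp2 (by omega)
    exact ⟨y, hr.trans hy, hs⟩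
  · exact final_step hc1 hc2 h11 h11' hT hA hB hne hp hadj

/-! ### Viable pairs -/

/-- A tableau of hook shape and one of a shape containing `(1, 1)` are neither equal nor
transposes of each other. -/
theorem viableTabPair_of_hook {ν1 ν2 : YoungDiagram} (A : SYT ν1) (B : SYT ν2)
    (h : (1, 1) ∈ ν1 ∧ (1, 1) ∉ ν2 ∨ (1, 1) ∉ ν1 ∧ (1, 1) ∈ ν2) : ViableTabPair A B := by
  have key : B.entry 1 1 ≠ A.entry 1 1 := by
    rcases h with ⟨ha, hb⟩ | ⟨ha, hb⟩
    · have := (A.entry_mem_s6 ha).1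
      rw [B.zero_outside 1 1 hb]; omega
    · have := (B.entry_mem_s6 hb).1
      rw [A.zero_outside 1 1 ha]; omega
  refine ⟨?_, fun e => key (by rw [show A.entry = B.entry from e]), fun e => key (e 1 1)⟩
  rintro ⟨k1, k2⟩
  rcases h with ⟨ha, hb⟩ | ⟨ha, hb⟩
  · exact k1 ha
  · exact k2 hb

/-- Theorem. Let `(μ1, μ2)` be a viable pair of partitions of `n` which is not base
case, and let `A ∈ SYT(μ1)`, `B ∈ SYT(μ2)` form a viable pair of tableaux. Then there
is `g ∈ C_n` (acting diagonally) such that the pair `(g(A) ∖ n, g(B) ∖ n)` obtained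
by removing the boxes containing `n` is also viable. -/
theorem pre_move_two_transitivity (n : ℕ) (μ1 μ2 : YoungDiagram)
    (h1 : μ1.card = n) (h2 : μ2.card = n)
    (hv : ViablePairShape μ1 μ2) (hnb : ¬ BaseCasePair μ1 μ2)
    (A : SYT μ1) (B : SYT μ2) (hAB : ViableTabPair A B) :
    ∃ g ∈ BKpairGroup μ1 μ2,
      ∀ (ν1 ν2 : YoungDiagram) (A' : SYT ν1) (B' : SYT ν2),
        IsRestriction (g (A, B)).1 A' → IsRestriction (g (A, B)).2 B' →
          ViableTabPair A' B' := by
  -- a hook stays a hook under deletion of a box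
  have hook_sub : ∀ {μ ν : YoungDiagram} {T : SYT μ} {T' : SYT ν}, IsRestriction T T' →
      HookShaped μ → HookShaped ν := fun h hk hm => hk (h.1 hm)
  by_cases k1 : HookShaped μ1
  · have k2 : ¬ HookShaped μ2 := fun k2 => hv ⟨k1, k2⟩
    have a2 : ¬ AlmostHookShaped μ2 := fun a2 => hnb ⟨hv, Or.inr (Or.inr ⟨k1, a2⟩)⟩
    refine ⟨1, one_mem _, fun ν1 ν2 A' B' hA hB => viableTabPair_of_hook A' B' (Or.inr ⟨?_, ?_⟩)⟩
    · exact hook_sub hA k1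
    · exact not_not.1 (hB.not_hookShaped k2 a2)
  by_cases k2 : HookShaped μ2
  · have a1 : ¬ AlmostHookShaped μ1 := fun a1 => hnb ⟨hv, Or.inr (Or.inl ⟨a1, k2⟩)⟩
    refine ⟨1, one_mem _, fun ν1 ν2 A' B' hA hB => viableTabPair_of_hook A' B' (Or.inl ⟨?_, ?_⟩)⟩
    · exact not_not.1 (hA.not_hookShaped k1 a1)
    · exact hook_sub hB k2
  have h11 : (1, 1) ∈ μ1 := not_not.1 k1
  have h11' : (1, 1) ∈ μ2 := not_not.1 k2
  suffices H : ∃ y, BKReach (A, B) y ∧ Separated n y.1 y.2 by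
    obtain ⟨y, hr, hs⟩ := H
    obtain ⟨g, hg, rfl⟩ := hr.exists_mem
    refine ⟨g, hg, fun ν1 ν2 A' B' hA hB => ⟨?_, fun e => hs.1 ?_, fun e => hs.2 ?_⟩⟩
    · rintro ⟨l1, l2⟩
      have a1 : AlmostHookShaped μ1 := by
        by_contra a1
        exact hA.not_hookShaped k1 a1 l1
      have a2 : AlmostHookShaped μ2 := by
        by_contra a2
        exact hB.not_hookShaped k2 a2 l2
      exact hnb ⟨hv, Or.inl ⟨a1, a2⟩⟩
    · intro i j
      have eA := hA.entry_eq i j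
      have eB := hB.entry_eq i j
      rw [h1] at eA
      rw [h2] at eB
      rw [← eA, ← eB, show A'.entry = B'.entry from e]
    · intro i j
      have eA := hA.entry_eq j i
      have eB := hB.entry_eq i j
      rw [h1] at eA
      rw [h2] at eB
      rw [← eA, ← eB, e i j]
  by_cases hT : TruncEq n A B
  · exact exists_separated h1 h2 h11 h11' hT hAB.2.1
  by_cases hT' : ∀ i j, trunc n (B.entry i j) = trunc n (A.entry j i)
  · obtain ⟨⟨A2, B2t⟩, hr, hs⟩ := exists_separated h1 (μ2 := μ2.transpose) 
      ((SYT.card_transpose μ2).trans h2) h11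
      (by simpa [YoungDiagram.mem_transpose] using h11') (A := A) (B := B.transpose)
      (fun i j => (hT' j i).symm)
      (fun e => hAB.2.2 fun i j => by rw [e]; rfl)
    obtain ⟨B2, hr2, rfl⟩ := hr.of_transpose
    exact ⟨(A2, B2), hr2, fun h => hs.2 fun i j => (h j i).symm, fun h => hs.1 fun i j =>
      (h j i).symm⟩
  · exact ⟨(A, B), Relation.ReflTransGen.refl, hT, hT'⟩
end

section
/- For any non-hook-shaped partition λ of n with n ≥ 5, each of the three permutations of SYT(λ) given by t_3, t_2, and the composition t_2∘t_4 is not the identity. -/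
/-! ### Tableaux obtained by numbering boxes along a linear order -/

/-- The total order on boxes comparing first the weight `a`, then the row, then the column. -/
def boxLE (a : ℕ → ℕ → ℕ) (d c : ℕ × ℕ) : Prop :=
  a d.1 d.2 < a c.1 c.2 ∨
    (a d.1 d.2 = a c.1 c.2 ∧ (d.1 < c.1 ∨ (d.1 = c.1 ∧ d.2 ≤ c.2)))

open Classical in
/-- The position of the box `c` in the order `boxLE a` on the boxes of `μ`, counted from `1`. -/
noncomputable def boxRank (μ : YoungDiagram) (a : ℕ → ℕ → ℕ) (c : ℕ × ℕ) : ℕ :=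
  (μ.cells.filter (fun d => boxLE a d c)).card

theorem boxRank_lt {μ : YoungDiagram} {a : ℕ → ℕ → ℕ} {c d : ℕ × ℕ} (hd : d ∈ μ)
    (hcd : boxLE a c d) (hne : c ≠ d) : boxRank μ a c < boxRank μ a d := by
  classical
  have hdc : ¬ boxLE a d c := by
    intro h
    apply hne
    unfold boxLE at h hcd
    apply Prod.ext <;> omega
  apply Finset.card_lt_card
  rw [Finset.ssubset_iff_of_subset]
  · refine ⟨d, ?_, ?_⟩
    · simp only [Finset.mem_filter, YoungDiagram.mem_cells]
      exact ⟨hd, by unfold boxLE; omega⟩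
    · simp [hdc]
  · intro x hx
    simp only [Finset.mem_filter] at hx ⊢
    refine ⟨hx.1, ?_⟩
    have := hx.2
    unfold boxLE at this hcd ⊢
    omega

/-- Numbering the boxes along `boxLE a`, for a weight `a` that is weakly increasing along rows
and columns, gives a standard Young tableau. -/
theorem exists_SYT_of_weight (μ : YoungDiagram) (a : ℕ → ℕ → ℕ)
    (ha : ∀ i i' j j', i ≤ i' → j ≤ j' → a i j ≤ a i' j') :
    ∃ T : SYT μ, ∀ i j, (i, j) ∈ μ → T.entry i j = boxRank μ a (i, j) := by
  classical
  have key : ∀ c d : ℕ × ℕ, c.1 ≤ d.1 → c.2 ≤ d.2 → c ≠ d → d ∈ μ →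
      boxRank μ a c < boxRank μ a d := by
    intro c d h1 h2 hne hd
    refine boxRank_lt hd ?_ hne
    have := ha _ _ _ _ h1 h2
    unfold boxLE
    omega
  refine ⟨⟨fun i j => if (i, j) ∈ μ then boxRank μ a (i, j) else 0, ?_, ?_, ?_, ?_⟩, ?_⟩
  · intro i j h
    simp [h]
  · intro i j1 j2 h hm
    have hm1 : (i, j1) ∈ μ := μ.up_left_mem le_rfl h.le hm
    simp only [hm, hm1, if_true]
    exact key _ _ le_rfl h.le (by simp; omega) hm
  · intro i1 i2 j h hm
    have hm1 : (i1, j) ∈ μ := μ.up_left_mem h.le le_rfl hm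
    simp only [hm, hm1, if_true]
    exact key _ _ h.le le_rfl (by simp; omega) hm
  · apply Finset.eq_of_subset_of_card_le
    · intro x hx
      rw [Finset.mem_image] at hx
      obtain ⟨c, hc, rfl⟩ := hx
      have hc' : (c.1, c.2) ∈ μ := by simpa using hc
      simp only [hc', if_true, Finset.mem_Icc]
      constructor
      · apply Finset.card_pos.2
        exact ⟨c, by simp only [Finset.mem_filter]; exact ⟨hc, by unfold boxLE; simp⟩⟩
      · exact Finset.card_filter_le _ _
    · rw [Finset.card_image_of_injOn]
      · simp
      · intro c hc d hd h
        have hc' : (c.1, c.2) ∈ μ := by simpa using hc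
        have hd' : (d.1, d.2) ∈ μ := by simpa using hd
        simp only [hc', hd', if_true] at h
        by_contra hne
        have : boxLE a c d ∨ boxLE a d c := by
          unfold boxLE
          omega
        rcases this with h' | h'
        · exact absurd h (boxRank_lt hd' h' hne).ne
        · exact absurd h (boxRank_lt hc' h' (Ne.symm hne)).ne'
  · intro i j h
    simp [h]

/-! ### When a Bender–Knuth involution moves a tableau -/

theorem SYT.entry_inj_s13 {μ : YoungDiagram} (T : SYT μ) {c d : ℕ × ℕ} (hc : c ∈ μ) (hd : d ∈ μ)
    (h : T.entry c.1 c.2 = T.entry d.1 d.2) : c = d := by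
  have hinj : Set.InjOn (fun c : ℕ × ℕ => T.entry c.1 c.2) μ.cells := by
    rw [← Finset.card_image_iff, T.image_eq]
    simp
  exact hinj (by simpa using hc) (by simpa using hd) h

theorem SYT.entry_mem_Icc {μ : YoungDiagram} (T : SYT μ) {c : ℕ × ℕ} (hc : c ∈ μ) :
    T.entry c.1 c.2 ∈ Finset.Icc 1 μ.card := by
  rw [← T.image_eq]
  exact Finset.mem_image.2 ⟨c, by simpa using hc, rfl⟩

/-- The involution `t_k` exchanges `k` and `k + 1` as soon as these lie in different rows and in
different columns. -/
theorem BK_entry_of_apart {μ : YoungDiagram} {k : ℕ} (T : SYT μ) {c d : ℕ × ℕ}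
    (hc : c ∈ μ) (hd : d ∈ μ) (hck : T.entry c.1 c.2 = k) (hdk : T.entry d.1 d.2 = k + 1)
    (h1 : c.1 ≠ d.1) (h2 : c.2 ≠ d.2) :
    (BK μ k T).entry = fun i j => swapVal k (T.entry i j) := by
  have hk1 := T.entry_mem_Icc hc
  have hk2 := T.entry_mem_Icc hd
  rw [hck, Finset.mem_Icc] at hk1
  rw [hdk, Finset.mem_Icc] at hk2
  -- `swapVal k` reverses the order of `x < y` only for the pair `(k, k + 1)`.
  have hlt : ∀ x y, x < y → ¬ (x = k ∧ y = k + 1) → swapVal k x < swapVal k y := by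
    intro x y hxy hn
    unfold swapVal
    split_ifs <;> omega
  apply bkFun_pos
  refine ⟨⟨fun i j => swapVal k (T.entry i j), ?_, ?_, ?_, ?_⟩, rfl⟩
  · intro i j h
    rw [T.zero_outside i j h, swapVal, if_neg (by omega), if_neg (by omega)]
  · intro i j1 j2 h hm
    have hm1 : (i, j1) ∈ μ := μ.up_left_mem le_rfl h.le hm
    apply hlt _ _ (T.row_strict i j1 j2 h hm)
    rintro ⟨e1, e2⟩
    have f1 := T.entry_inj_s13 (c := (i, j1)) hm1 hc (by simp only [e1, hck])
    have f2 := T.entry_inj_s13 (c := (i, j2)) hm hd (by simp only [e2, hdk])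
    exact h1 (by rw [← f1, ← f2])
  · intro i1 i2 j h hm
    have hm1 : (i1, j) ∈ μ := μ.up_left_mem h.le le_rfl hm
    apply hlt _ _ (T.col_strict i1 i2 j h hm)
    rintro ⟨e1, e2⟩
    have f1 := T.entry_inj_s13 (c := (i1, j)) hm1 hc (by simp only [e1, hck])
    have f2 := T.entry_inj_s13 (c := (i2, j)) hm hd (by simp only [e2, hdk])
    exact h2 (by rw [← f1, ← f2])
  · have himg : μ.cells.image (fun c => swapVal k (T.entry c.1 c.2)) =
        (μ.cells.image (fun c => T.entry c.1 c.2)).image (swapVal k) := by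
      rw [Finset.image_image]; rfl
    rw [himg, T.image_eq]
    ext x
    simp only [Finset.mem_image, Finset.mem_Icc]
    constructor
    · rintro ⟨y, hy, rfl⟩
      unfold swapVal
      split_ifs <;> omega
    · intro hx
      refine ⟨swapVal k x, ?_, swapVal_invol k x⟩
      unfold swapVal
      split_ifs <;> omega

theorem BK_entry_eq_succ_of_apart {μ : YoungDiagram} {k : ℕ} (T : SYT μ) {c d : ℕ × ℕ}
    (hc : c ∈ μ) (hd : d ∈ μ) (hck : T.entry c.1 c.2 = k) (hdk : T.entry d.1 d.2 = k + 1)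
    (h1 : c.1 ≠ d.1) (h2 : c.2 ≠ d.2) :
    (BK μ k T).entry c.1 c.2 = k + 1 := by
  rw [BK_entry_of_apart T hc hd hck hdk h1 h2]
  simp [hck, swapVal]

theorem BK_entry_of_ne {μ : YoungDiagram} {k : ℕ} (T : SYT μ) {i j : ℕ}
    (h : T.entry i j ≠ k) (h' : T.entry i j ≠ k + 1) :
    (BK μ k T).entry i j = T.entry i j := by
  change (bkFun μ k T).entry i j = _
  by_cases hT : ∃ T' : SYT μ, T'.entry = fun i j => swapVal k (T.entry i j)
  · rw [bkFun_pos hT]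
    simp [swapVal, h, h']
  · rw [bkFun_neg hT]

/-! ### Tableaux with prescribed small entries -/

/-- The rank of a box is computed by listing the boxes up to and including it. -/
theorem boxRank_eq {μ : YoungDiagram} {a : ℕ → ℕ → ℕ} {c : ℕ × ℕ} (s : Finset (ℕ × ℕ))
    (hs : ∀ d ∈ s, d ∈ μ) (h : ∀ i j, boxLE a (i, j) c ↔ (i, j) ∈ s) :
    boxRank μ a c = s.card := by
  classical
  unfold boxRank
  congr 1
  ext ⟨i, j⟩
  simp only [Finset.mem_filter, YoungDiagram.mem_cells, h]
  exact ⟨fun h => h.2, fun h => ⟨hs _ h, h⟩⟩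

/-- A tableau beginning with `1 2 / 3`. -/
theorem exists_SYT_two_three {μ : YoungDiagram} (h : (1, 1) ∈ μ) :
    ∃ T : SYT μ, T.entry 0 1 = 2 ∧ T.entry 1 0 = 3 := by
  have h00 : (0, 0) ∈ μ := μ.up_left_mem (by omega) (by omega) h
  have h01 : (0, 1) ∈ μ := μ.up_left_mem (by omega) (by omega) h
  have h10 : (1, 0) ∈ μ := μ.up_left_mem (by omega) (by omega) h
  obtain ⟨T, hT⟩ := exists_SYT_of_weight μ
    (fun i j => if i = 0 ∧ j = 0 then 1 else if i = 0 ∧ j = 1 then 2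
      else if i = 1 ∧ j = 0 then 3 else 4)
    (by intro i i' j j' h1 h2; split_ifs <;> omega)
  refine ⟨T, ?_, ?_⟩
  · rw [hT _ _ h01, boxRank_eq {(0, 0), (0, 1)}]
    · rfl
    · simp [h00, h01]
    · intro i j
      simp only [boxLE, Finset.mem_insert, Finset.mem_singleton, Prod.mk.injEq]
      grind
  · rw [hT _ _ h10, boxRank_eq {(0, 0), (0, 1), (1, 0)}]
    · rfl
    · simp [h00, h01, h10]
    · intro i j
      simp only [boxLE, Finset.mem_insert, Finset.mem_singleton, Prod.mk.injEq]
      grind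

/-- A tableau beginning with `1 2 3 / 4`. -/
theorem exists_SYT_three_four_row {μ : YoungDiagram} (h02 : (0, 2) ∈ μ) (h10 : (1, 0) ∈ μ) :
    ∃ T : SYT μ, T.entry 0 2 = 3 ∧ T.entry 1 0 = 4 := by
  have h00 : (0, 0) ∈ μ := μ.up_left_mem (by omega) (by omega) h02
  have h01 : (0, 1) ∈ μ := μ.up_left_mem (by omega) (by omega) h02
  obtain ⟨T, hT⟩ := exists_SYT_of_weight μ
    (fun i j => if i = 0 ∧ j = 0 then 1 else if i = 0 ∧ j = 1 then 2
      else if i = 0 ∧ j = 2 then 3 else if i = 1 ∧ j = 0 then 4 else 5)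
    (by intro i i' j j' h1 h2; split_ifs <;> omega)
  refine ⟨T, ?_, ?_⟩
  · rw [hT _ _ h02, boxRank_eq {(0, 0), (0, 1), (0, 2)}]
    · rfl
    · simp [h00, h01, h02]
    · intro i j
      simp only [boxLE, Finset.mem_insert, Finset.mem_singleton, Prod.mk.injEq]
      grind
  · rw [hT _ _ h10, boxRank_eq {(0, 0), (0, 1), (0, 2), (1, 0)}]
    · rfl
    · simp [h00, h01, h02, h10]
    · intro i j
      simp only [boxLE, Finset.mem_insert, Finset.mem_singleton, Prod.mk.injEq]
      grind

/-- A tableau beginning with the transpose of `1 2 3 / 4`. -/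
theorem exists_SYT_three_four_col {μ : YoungDiagram} (h20 : (2, 0) ∈ μ) (h01 : (0, 1) ∈ μ) :
    ∃ T : SYT μ, T.entry 2 0 = 3 ∧ T.entry 0 1 = 4 := by
  have h00 : (0, 0) ∈ μ := μ.up_left_mem (by omega) (by omega) h20
  have h10 : (1, 0) ∈ μ := μ.up_left_mem (by omega) (by omega) h20
  obtain ⟨T, hT⟩ := exists_SYT_of_weight μ
    (fun i j => if i = 0 ∧ j = 0 then 1 else if i = 1 ∧ j = 0 then 2
      else if i = 2 ∧ j = 0 then 3 else if i = 0 ∧ j = 1 then 4 else 5)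
    (by intro i i' j j' h1 h2; split_ifs <;> omega)
  refine ⟨T, ?_, ?_⟩
  · rw [hT _ _ h20, boxRank_eq {(0, 0), (1, 0), (2, 0)}]
    · rfl
    · simp [h00, h10, h20]
    · intro i j
      simp only [boxLE, Finset.mem_insert, Finset.mem_singleton, Prod.mk.injEq]
      grind
  · rw [hT _ _ h01, boxRank_eq {(0, 0), (1, 0), (2, 0), (0, 1)}]
    · rfl
    · simp [h00, h10, h20, h01]
    · intro i j
      simp only [boxLE, Finset.mem_insert, Finset.mem_singleton, Prod.mk.injEq]
      grind

theorem mem_zero_two_or_two_zero {μ : YoungDiagram} (h : 5 ≤ μ.card) :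
    (0, 2) ∈ μ ∨ (2, 0) ∈ μ := by
  by_contra! hcon
  -- Without these two boxes the diagram lies in the `2 × 2` square.
  have hsub : μ.cells ⊆ Finset.range 2 ×ˢ Finset.range 2 := by
    rintro ⟨i, j⟩ hij
    rw [YoungDiagram.mem_cells] at hij
    simp only [Finset.mem_product, Finset.mem_range]
    constructor <;> by_contra! hlt
    · exact hcon.2 (μ.up_left_mem hlt (Nat.zero_le _) hij)
    · exact hcon.1 (μ.up_left_mem (Nat.zero_le _) hlt hij)
  have := Finset.card_le_card hsub
  simp only [Finset.card_product, Finset.card_range] at this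
  change μ.cells.card ≤ 2 * 2 at this
  change 5 ≤ μ.cells.card at h
  omega

/-- Theorem. For any non-hook-shaped partition `μ` of `n ≥ 5`, each of the
permutations `t_3`, `t_2` and `t_2 ∘ t_4` of `SYT(μ)` is not the identity. -/
theorem bk_involutions_nontrivial (n : ℕ) (μ : YoungDiagram) (hμ : μ.card = n)
    (hn : 5 ≤ n) (hh : ¬ HookShaped μ) :
    BK μ 3 ≠ 1 ∧ BK μ 2 ≠ 1 ∧ BK μ 2 * BK μ 4 ≠ 1 := by
  have h11 : (1, 1) ∈ μ := not_not.1 hh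
  have h01 : (0, 1) ∈ μ := μ.up_left_mem (by omega) (by omega) h11
  have h10 : (1, 0) ∈ μ := μ.up_left_mem (by omega) (by omega) h11
  obtain ⟨T, hT2, hT3⟩ := exists_SYT_two_three h11
  refine ⟨?_, ?_, ?_⟩
  · intro he
    rcases mem_zero_two_or_two_zero (hμ ▸ hn) with h02 | h20
    · obtain ⟨S, hS3, hS4⟩ := exists_SYT_three_four_row h02 h10
      have := BK_entry_eq_succ_of_apart S h02 h10 hS3 hS4 (by simp) (by simp)
      simp [he, hS3] at this
    · obtain ⟨S, hS3, hS4⟩ := exists_SYT_three_four_col h20 h01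
      have := BK_entry_eq_succ_of_apart S h20 h01 hS3 hS4 (by simp) (by simp)
      simp [he, hS3] at this
  · intro he
    have := BK_entry_eq_succ_of_apart T h01 h10 hT2 hT3 (by simp) (by simp)
    simp [he, hT2] at this
  · intro he
    have e2 : (BK μ 4 T).entry 0 1 = 2 := by
      rw [BK_entry_of_ne T (by omega) (by omega), hT2]
    have e3 : (BK μ 4 T).entry 1 0 = 3 := by
      rw [BK_entry_of_ne T (by omega) (by omega), hT3]
    have := BK_entry_eq_succ_of_apart (BK μ 4 T) h01 h10 e2 e3 (by simp) (by simp)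
    rw [← Equiv.Perm.mul_apply, he] at this
    simp [hT2] at this
end
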